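/- Let l_1,…,l_n and r_1,…,r_n be d-dimensional bit vectors and let ℓ ≥ 1, p ∈ {0,1}, q ≥ 0 be integers, and let G = G_{L,R,ℓ,p,q}. For every 1 ≤ i ≤ n and every 1 ≤ i' ≤ n with i' ≠ i, dist_G(u_i^L, v_{i'}^L) = 3ℓ − p and dist_G(u_i^R, v_{i'}^R) = 3ℓ − p. -/

import Mathlib

namespace GraphOV

/-- Two bit vectors (functions into `Fin 2`) are orthogonal if in every coordinate
at least one of them is `0`. -/
def Orth {d : ℕ} (a b : Fin d → Fin 2) : Prop := ∀ k, a k = 0 ∨ b k = 0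

/-- A system of internally disjoint paths joining exterior vertices from `E`:
for each path name `i : ι` we record its two endpoints and its length. -/
structure PathSys (E : Type) (ι : Type) where
  src : ι → E
  dst : ι → E
  len : ι → ℕ

namespace PathSys

variable {E ι : Type}

/-- Endpoints of zero-length paths get identified. -/
def idRel (S : PathSys E ι) (a b : E) : Prop :=
  ∃ i, S.len i = 0 ∧ S.src i = a ∧ S.dst i = b

/-- Vertices of the glued graph: exterior vertices (up to identification) together
with, for each path of length `m`, fresh interior vertices at positions `1,…,m-1`. -/
def Vert (S : PathSys E ι) : Type :=
  Quot S.idRel ⊕ Σ i : ι, {t : ℕ // 0 < t ∧ t < S.len i}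

/-- The vertex corresponding to an exterior vertex. -/
def ext (S : PathSys E ι) (a : E) : S.Vert := Sum.inl (Quot.mk _ a)

/-- The `t`-th vertex on the path named `i` (for `0 ≤ t ≤ S.len i`). -/
def pt (S : PathSys E ι) (i : ι) (t : ℕ) : S.Vert :=
  if h : 0 < t ∧ t < S.len i then Sum.inr ⟨i, t, h⟩
  else if t = 0 then S.ext (S.src i) else S.ext (S.dst i)

/-- The glued graph: consecutive vertices on each path are adjacent. -/
def graph (S : PathSys E ι) : SimpleGraph S.Vert :=
  SimpleGraph.fromRel fun a b =>
    ∃ i t, t + 1 ≤ S.len i ∧ a = S.pt i t ∧ b = S.pt i (t + 1)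

/-- The set of vertices lying on the path named `i`. -/
def onPath (S : PathSys E ι) (i : ι) : Set S.Vert :=
  {v | ∃ t ≤ S.len i, v = S.pt i t}

/-- A walk in the glued graph contains the path named `i` entirely if all vertices of
that path occur consecutively (in forward or backward order) on the walk. -/
def WalkContainsPath (S : PathSys E ι) {x y : S.Vert} (W : S.graph.Walk x y) (i : ι) : Prop :=
  ∃ a, a + S.len i ≤ W.length ∧
    ((∀ t ≤ S.len i, W.getVert (a + t) = S.pt i t) ∨
     (∀ t ≤ S.len i, W.getVert (a + t) = S.pt i (S.len i - t)))

end PathSys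

/-- The exterior vertices of the graph `G_{L,R,ℓ,p,q}`. -/
inductive Ext (n d : ℕ) : Type
  | uL : Fin n → Ext n d
  | uR : Fin n → Ext n d
  | vL : Fin n → Ext n d
  | vR : Fin n → Ext n d
  | wL : Fin d → Ext n d
  | wR : Fin d → Ext n d
  | xL : Ext n d
  | xR : Ext n d
  | yL : Ext n d
  | yR : Ext n d

/-- Names for the paths of the graph `G_{L,R,ℓ,p,q}`. -/
inductive Idx (n d : ℕ) (l r : Fin n → Fin d → Fin 2) : Type
  | uvL : Fin n → Idx n d l r
  | uvR : Fin n → Idx n d l r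
  | vxL : Fin n → Idx n d l r
  | vxR : Fin n → Idx n d l r
  | vwL : (i : Fin n) → (k : Fin d) → l i k = 1 → Idx n d l r
  | vwR : (j : Fin n) → (k : Fin d) → r j k = 1 → Idx n d l r
  | ywL : Fin d → Idx n d l r
  | ywR : Fin d → Idx n d l r
  | ww : Fin d → Idx n d l r
  | xyL : Idx n d l r
  | xyR : Idx n d l r
  | yy : Idx n d l r

/-- The path system defining the graph `G_{L,R,ℓ,p,q}`. -/
def sys (n d : ℕ) (l r : Fin n → Fin d → Fin 2) (ℓ p q : ℕ) :
    PathSys (Ext n d) (Idx n d l r) where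
  src := fun i => match i with
    | .uvL i => .uL i
    | .uvR i => .uR i
    | .vxL i => .vL i
    | .vxR i => .vR i
    | .vwL i _ _ => .vL i
    | .vwR j _ _ => .vR j
    | .ywL _ => .yL
    | .ywR _ => .yR
    | .ww k => .wL k
    | .xyL => .xL
    | .xyR => .xR
    | .yy => .yL
  dst := fun i => match i with
    | .uvL i => .vL i
    | .uvR i => .vR i
    | .vxL _ => .xL
    | .vxR _ => .xR
    | .vwL _ k _ => .wL k
    | .vwR _ k _ => .wR k
    | .ywL k => .wL k
    | .ywR k => .wR k
    | .ww k => .wR k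
    | .xyL => .yL
    | .xyR => .yR
    | .yy => .yR
  len := fun i => match i with
    | .uvL _ => ℓ - p
    | .uvR _ => ℓ - p
    | .vxL _ => ℓ
    | .vxR _ => ℓ
    | .vwL _ _ _ => ℓ
    | .vwR _ _ _ => ℓ
    | .ywL _ => ℓ
    | .ywR _ => ℓ
    | .ww _ => q
    | .xyL => ℓ - p
    | .xyR => ℓ - p
    | .yy => p + q

/-- The set `P_i^L`. -/
def PL (n d : ℕ) (l r : Fin n → Fin d → Fin 2) (ℓ p q : ℕ) (i : Fin n) :
    Set (sys n d l r ℓ p q).Vert :=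
  (sys n d l r ℓ p q).onPath (.uvL i) ∪
    ((sys n d l r ℓ p q).onPath (.vxL i) \ {(sys n d l r ℓ p q).ext .xL}) ∪
    ⋃ (k : Fin d) (h : l i k = 1),
      ((sys n d l r ℓ p q).onPath (.vwL i k h) \ {(sys n d l r ℓ p q).ext (.wL k)})

/-- The set `P_j^R`. -/
def PR (n d : ℕ) (l r : Fin n → Fin d → Fin 2) (ℓ p q : ℕ) (j : Fin n) :
    Set (sys n d l r ℓ p q).Vert :=
  (sys n d l r ℓ p q).onPath (.uvR j) ∪
    ((sys n d l r ℓ p q).onPath (.vxR j) \ {(sys n d l r ℓ p q).ext .xR}) ∪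
    ⋃ (k : Fin d) (h : r j k = 1),
      ((sys n d l r ℓ p q).onPath (.vwR j k h) \ {(sys n d l r ℓ p q).ext (.wR k)})

/-- The set `V^L`. -/
def VL (n d : ℕ) (l r : Fin n → Fin d → Fin 2) (ℓ p q : ℕ) :
    Set (sys n d l r ℓ p q).Vert := ⋃ i : Fin n, PL n d l r ℓ p q i

/-- The set `V^R`. -/
def VR (n d : ℕ) (l r : Fin n → Fin d → Fin 2) (ℓ p q : ℕ) :
    Set (sys n d l r ℓ p q).Vert := ⋃ j : Fin n, PR n d l r ℓ p q j

/-- The set `V^M` of all remaining vertices. -/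
def VM (n d : ℕ) (l r : Fin n → Fin d → Fin 2) (ℓ p q : ℕ) :
    Set (sys n d l r ℓ p q).Vert := (VL n d l r ℓ p q ∪ VR n d l r ℓ p q)ᶜ

/-!
The upper bound is the detour `u_i, v_i, x, v_{i'}` on the relevant side. For the lower bound, label
the exterior vertices on both sides by `0` at `u_i`, `ℓ - p` at `v_i`, `3 * ℓ - p` at every
`u_j` and `v_j` with `j ≠ i`, and `2 * ℓ - p` everywhere else. The labels of the two ends of a path
differ by at most its length, so the labelling extends to the interior vertices so as to change by
at most `1` along each edge; hence `u_i` and `v_{i'}` are at distance at least `3 * ℓ - p`.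
-/

theorem le_add_edist_of_forall_adj {V : Type*} {G : SimpleGraph V} {f : V → ℕ}
    (hf : ∀ ⦃a b⦄, G.Adj a b → f b ≤ f a + 1) (a b : V) : (f b : ℕ∞) ≤ f a + G.edist a b := by
  have le_add_length {a b : V} (W : G.Walk a b) : f b ≤ f a + W.length := by
    induction W with
    | nil => simp
    | cons hadj W ih =>
      have hstep := hf hadj
      rw [SimpleGraph.Walk.length_cons]
      lia
  rw [← tsub_le_iff_left]
  refine le_iInf fun W ↦ ?_
  rw [tsub_le_iff_left]
  exact_mod_cast le_add_length W

namespace PathSys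

variable {E ι : Type} (S : PathSys E ι)

theorem pt_zero (i : ι) : S.pt i 0 = S.ext (S.src i) := by
  simp [pt]

theorem pt_len (i : ι) : S.pt i (S.len i) = S.ext (S.dst i) := by
  by_cases hlen : S.len i = 0
  · rw [hlen, pt_zero]
    exact congrArg Sum.inl (Quot.sound ⟨i, hlen, rfl, rfl⟩)
  · simp [pt, hlen]

variable {S} in
theorem pt_of_pos_of_lt {i : ι} {t : ℕ} (hpos : 0 < t) (hlt : t < S.len i) :
    S.pt i t = Sum.inr ⟨i, t, hpos, hlt⟩ :=
  dif_pos ⟨hpos, hlt⟩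

theorem edist_pt_succ_le_one {i : ι} {t : ℕ} (ht : t < S.len i) :
    S.graph.edist (S.pt i t) (S.pt i (t + 1)) ≤ 1 := by
  rw [SimpleGraph.edist_le_one_iff_adj_or_eq, or_iff_not_imp_right]
  exact fun hne ↦ (SimpleGraph.fromRel_adj _ _ _).2 ⟨hne, .inl ⟨i, t, ht, rfl, rfl⟩⟩

theorem edist_src_pt_le {i : ι} {t : ℕ} (ht : t ≤ S.len i) :
    S.graph.edist (S.ext (S.src i)) (S.pt i t) ≤ t := by
  induction t with
  | zero => simp [pt_zero]
  | succ t ih =>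
    calc S.graph.edist (S.ext (S.src i)) (S.pt i (t + 1))
        ≤ S.graph.edist (S.ext (S.src i)) (S.pt i t)
          + S.graph.edist (S.pt i t) (S.pt i (t + 1)) := SimpleGraph.edist_triangle
      _ ≤ t + 1 := add_le_add (ih (Nat.le_of_succ_le ht)) (S.edist_pt_succ_le_one ht)
      _ = (t + 1 : ℕ) := by push_cast; rfl

theorem edist_src_dst_le (i : ι) :
    S.graph.edist (S.ext (S.src i)) (S.ext (S.dst i)) ≤ S.len i :=
  S.pt_len i ▸ S.edist_src_pt_le le_rfl

theorem edist_src_src_le_add_add {i j k : ι} (hij : S.dst i = S.src j) (hjk : S.dst j = S.dst k) :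
    S.graph.edist (S.ext (S.src i)) (S.ext (S.src k)) ≤ (S.len i + S.len j + S.len k : ℕ) := by
  have hi := S.edist_src_dst_le i
  have hj := S.edist_src_dst_le j
  have hk := S.edist_src_dst_le k
  rw [SimpleGraph.edist_comm] at hk
  rw [hij] at hi
  rw [hjk] at hj
  push_cast
  exact SimpleGraph.edist_triangle.trans
    (add_le_add (SimpleGraph.edist_triangle.trans (add_le_add hi hj)) hk)

/-- A potential on a path system: a labelling of the exterior vertices whose values at the two ends
of each path differ by at most the length of that path. Potentials bound distances in the glued
graph from below. -/
def IsPotential (f : E → ℕ) : Prop :=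
  ∀ i, f (S.src i) ≤ f (S.dst i) + S.len i ∧ f (S.dst i) ≤ f (S.src i) + S.len i

namespace IsPotential

variable {S} {f : E → ℕ}

theorem eq_of_idRel (hf : S.IsPotential f) {a b : E} (hab : S.idRel a b) : f a = f b := by
  obtain ⟨i, hlen, rfl, rfl⟩ := hab
  have hi := hf i
  lia

/-- The extension of a potential to all vertices of the glued graph. At an interior vertex it is the
largest value that exceeds neither end's label by more than the distance to that end along the
path. -/
def extend (hf : S.IsPotential f) : S.Vert → ℕ :=
  Sum.elim (Quot.lift f fun _ _ ↦ hf.eq_of_idRel) fun ⟨i, t, _⟩ ↦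
    min (f (S.src i) + t) (f (S.dst i) + (S.len i - t))

theorem extend_ext (hf : S.IsPotential f) (a : E) : hf.extend (S.ext a) = f a :=
  rfl

theorem extend_pt (hf : S.IsPotential f) {i : ι} {t : ℕ} (ht : t ≤ S.len i) :
    hf.extend (S.pt i t) = min (f (S.src i) + t) (f (S.dst i) + (S.len i - t)) := by
  have hi := hf i
  rcases Nat.eq_zero_or_pos t with rfl | hpos
  · rw [pt_zero, extend_ext]
    lia
  rcases ht.eq_or_lt with rfl | hlt
  · rw [pt_len, extend_ext]
    lia
  · rw [pt_of_pos_of_lt hpos hlt]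
    rfl

theorem extend_le_extend_add_one (hf : S.IsPotential f) {a b : S.Vert} (hadj : S.graph.Adj a b) :
    hf.extend b ≤ hf.extend a + 1 := by
  obtain ⟨-, ⟨i, t, ht, rfl, rfl⟩ | ⟨i, t, ht, rfl, rfl⟩⟩ := (SimpleGraph.fromRel_adj _ _ _).1 hadj
  all_goals
    rw [hf.extend_pt ht, hf.extend_pt (Nat.le_of_succ_le ht)]
    lia

theorem le_add_edist (hf : S.IsPotential f) (a b : E) :
    (f b : ℕ∞) ≤ f a + S.graph.edist (S.ext a) (S.ext b) :=
  le_add_edist_of_forall_adj (fun _ _ ↦ hf.extend_le_extend_add_one) (S.ext a) (S.ext b)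

theorem dist_eq (hf : S.IsPotential f) {a b : E} {m : ℕ} (hfm : f b = f a + m)
    (hle : S.graph.edist (S.ext a) (S.ext b) ≤ m) :
    S.graph.dist (S.ext a) (S.ext b) = m := by
  have hge : (m : ℕ∞) ≤ S.graph.edist (S.ext a) (S.ext b) := by
    have hlower := hf.le_add_edist a b
    rw [hfm, Nat.cast_add] at hlower
    exact (ENat.add_le_add_iff_left (ENat.natCast_ne_top _)).1 hlower
  rw [SimpleGraph.dist, le_antisymm hle hge, ENat.toNat_natCast]

end IsPotential

end PathSys

/-- The potential on `G_{L,R,ℓ,p,q}` that separates the `i`-th vertices `u` and `v` from all other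
`u` and `v`, on both sides simultaneously. -/
def potential {n d : ℕ} (ℓ p : ℕ) (i : Fin n) : Ext n d → ℕ
  | .uL j | .uR j => if j = i then 0 else 3 * ℓ - p
  | .vL j | .vR j => if j = i then ℓ - p else 3 * ℓ - p
  | _ => 2 * ℓ - p

theorem isPotential_potential {n d ℓ p : ℕ} (q : ℕ) (hp : p ≤ ℓ) (l r : Fin n → Fin d → Fin 2)
    (i : Fin n) : (sys n d l r ℓ p q).IsPotential (potential ℓ p i) := by
  intro path
  cases path <;> simp only [sys, potential] <;> grind

theorem dist_u_to_v'_general {n d ℓ p : ℕ} (q : ℕ) (hp : p ≤ ℓ) (l r : Fin n → Fin d → Fin 2)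
    (i i' : Fin n) (hne : i' ≠ i) :
    (sys n d l r ℓ p q).graph.dist ((sys n d l r ℓ p q).ext (.uL i))
        ((sys n d l r ℓ p q).ext (.vL i')) = 3 * ℓ - p ∧
      (sys n d l r ℓ p q).graph.dist ((sys n d l r ℓ p q).ext (.uR i))
        ((sys n d l r ℓ p q).ext (.vR i')) = 3 * ℓ - p := by
  have hpot := isPotential_potential q hp l r i
  have hlen : ℓ - p + ℓ + ℓ = 3 * ℓ - p := by lia
  rw [← hlen]
  constructor
  · refine hpot.dist_eq ?_ ?_
    · simp [potential, hne, hlen]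
    · exact (sys n d l r ℓ p q).edist_src_src_le_add_add (i := .uvL i) (j := .vxL i) (k := .vxL i')
        rfl rfl
  · refine hpot.dist_eq ?_ ?_
    · simp [potential, hne, hlen]
    · exact (sys n d l r ℓ p q).edist_src_src_le_add_add (i := .uvR i) (j := .vxR i) (k := .vxR i')
        rfl rfl

theorem dist_u_to_v' (n d ℓ p q : ℕ) (hn : 1 ≤ n) (hd : 1 ≤ d) (hℓ : 1 ≤ ℓ)
    (hp : p ≤ 1) (l r : Fin n → Fin d → Fin 2) :
    ∀ i i' : Fin n, i' ≠ i →
      (sys n d l r ℓ p q).graph.dist ((sys n d l r ℓ p q).ext (.uL i))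
        ((sys n d l r ℓ p q).ext (.vL i')) = 3 * ℓ - p ∧
      (sys n d l r ℓ p q).graph.dist ((sys n d l r ℓ p q).ext (.uR i))
        ((sys n d l r ℓ p q).ext (.vR i')) = 3 * ℓ - p :=
  fun i i' hne ↦ dist_u_to_v'_general q (hp.trans hℓ) l r i i' hne

end GraphOV
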